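/- Define S(ω) := C_I + T⁻¹·D_I + Ĉᵀ∘(Cα − iωDα)⁻¹∘(T⁻¹·Dα − Cα)∘(Cα + iωDα)⁻¹∘Ĉ. Then S(ω) admits the alternative representation S(ω) = Cε^S + T⁻¹·D_I + Ĉᵀ∘(Cα − iωDα)⁻¹∘(T⁻¹·Dα + ω²·Dα∘Cα⁻¹∘Dα)∘(Cα + iωDα)⁻¹∘Ĉ. Consequently S(ω) is Hermitian (self-adjoint with respect to the Hermitian inner product on the complexification of V), and if in addition Cε^S is positive definite and D_I is positive semidefinite, then S(ω) is Hermitian positive definite. -/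

import Mathlib

open scoped ComplexInnerProductSpace

section Defs

variable {V : Type*} [NormedAddCommGroup V] [InnerProductSpace ℂ V] [FiniteDimensional ℂ V]

/-- `Ĉ := Cm − Cα ∘ Dα⁻¹ ∘ Dm`. -/
noncomputable def Chat (Cα Cm Dα Dm : V →L[ℂ] V) : V →L[ℂ] V :=
  Cm - Cα ∘L Ring.inverse Dα ∘L Dm

/-- The Schur complement `Cε^S := Cε − Cm ∘ Cα⁻¹ ∘ Cm`. -/
noncomputable def CSchur (Cε Cα Cm : V →L[ℂ] V) : V →L[ℂ] V :=
  Cε - Cm ∘L Ring.inverse Cα ∘L Cm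

/-- The instantaneous viscosity tensor `D_I := Dε − Dm∘Dα⁻¹∘Dm`. -/
noncomputable def DInst (Dε Dα Dm : V →L[ℂ] V) : V →L[ℂ] V :=
  Dε - Dm ∘L Ring.inverse Dα ∘L Dm

/-- The instantaneous elasticity tensor `C_I := Cε^S + Ĉᵀ∘Cα⁻¹∘Ĉ`. -/
noncomputable def CInst (Cε Cα Cm Dα Dm : V →L[ℂ] V) : V →L[ℂ] V :=
  CSchur Cε Cα Cm +
    ContinuousLinearMap.adjoint (Chat Cα Cm Dα Dm) ∘L Ring.inverse Cα ∘L Chat Cα Cm Dα Dm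

/-- `S(ω) := C_I + T⁻¹·D_I + Ĉᵀ∘(Cα − iωDα)⁻¹∘(T⁻¹·Dα − Cα)∘(Cα + iωDα)⁻¹∘Ĉ`. -/
noncomputable def Sfreq (Cε Cα Cm Dε Dα Dm : V →L[ℂ] V) (T ω : ℝ) : V →L[ℂ] V :=
  CInst Cε Cα Cm Dα Dm + ((T : ℂ)⁻¹) • DInst Dε Dα Dm +
    ContinuousLinearMap.adjoint (Chat Cα Cm Dα Dm) ∘L
      Ring.inverse (Cα - (Complex.I * (ω : ℂ)) • Dα) ∘L
        (((T : ℂ)⁻¹) • Dα - Cα) ∘L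
          Ring.inverse (Cα + (Complex.I * (ω : ℂ)) • Dα) ∘L Chat Cα Cm Dα Dm

end Defs

section Helpers

variable {V : Type*} [NormedAddCommGroup V] [InnerProductSpace ℂ V] [FiniteDimensional ℂ V]

/-- An endomorphism of a finite-dimensional space whose quadratic form has positive real part is
invertible. -/
theorem isUnit_of_re_inner_pos {A : V →L[ℂ] V} (hA : ∀ x : V, x ≠ 0 → 0 < (⟪A x, x⟫).re) :
    IsUnit A := by
  have hinj : Function.Injective A := by
    rw [injective_iff_map_eq_zero]
    intro x hx
    by_contra hne
    simpa [hx] using hA x hne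
  rw [ContinuousLinearMap.isUnit_iff_bijective]
  exact ⟨hinj, (LinearMap.injective_iff_surjective (f := A.toLinearMap)).1 hinj⟩

/-- A purely imaginary multiple of a self-adjoint operator has a quadratic form with vanishing real
part. -/
theorem re_inner_I_mul_smul_eq_zero {D : V →L[ℂ] V} (hD : IsSelfAdjoint D) (ω : ℝ) (x : V) :
    (⟪((Complex.I * (ω : ℂ)) • D) x, x⟫).re = 0 := by
  have him : (⟪D x, x⟫).im = 0 := hD.isSymmetric.im_inner_apply_self x
  simp [him]

/-- The congruence identity `Q A⁻¹ P = A + ω² D A⁻¹ D` for `Q = A - iωD` and `P = A + iωD`, solved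
for `A⁻¹`. -/
theorem inverse_eq_of_sub_add {R : Type*} [Ring R] [Algebra ℂ R] {A D : R} {ω : ℂ} (hA : IsUnit A)
    (hQ : IsUnit (A - (Complex.I * ω) • D)) (hP : IsUnit (A + (Complex.I * ω) • D)) :
    Ring.inverse A = Ring.inverse (A - (Complex.I * ω) • D) *
      (A + ω ^ 2 • (D * Ring.inverse A * D)) * Ring.inverse (A + (Complex.I * ω) • D) := by
  have key : (A - (Complex.I * ω) • D) * Ring.inverse A * (A + (Complex.I * ω) • D) =
      A + ω ^ 2 • (D * Ring.inverse A * D) := by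
    have hc : (Complex.I * ω) * (Complex.I * ω) = -ω ^ 2 := by
      linear_combination ω ^ 2 * Complex.I_mul_I
    simp only [sub_mul, mul_add, Ring.mul_inverse_cancel _ hA, smul_mul_assoc, mul_smul_comm,
      mul_assoc, Ring.inverse_mul_cancel _ hA, one_mul, mul_one, smul_sub, smul_smul, hc, neg_smul]
    abel
  rw [← key]
  simp only [mul_assoc, Ring.mul_inverse_cancel _ hP, mul_one]
  rw [← mul_assoc, Ring.inverse_mul_cancel _ hQ, one_mul]

theorem isSelfAdjoint_ringInverse {R : Type*} [Ring R] [StarRing R] {a : R}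
    (ha : IsSelfAdjoint a) : IsSelfAdjoint (Ring.inverse a) := by
  rw [IsSelfAdjoint, ← Ring.inverse_star, ha.star_eq]

theorem re_inner_ringInverse_nonneg {A : V →L[ℂ] V}
    (hA : ∀ x : V, x ≠ 0 → 0 < (⟪A x, x⟫).re) (y : V) : 0 ≤ (⟪Ring.inverse A y, y⟫).re := by
  have hy : A (Ring.inverse A y) = y := by
    simpa using DFunLike.congr_fun (Ring.mul_inverse_cancel _ (isUnit_of_re_inner_pos hA)) y
  generalize Ring.inverse A y = z at hy ⊢
  subst hy
  rw [← inner_conj_symm, Complex.conj_re]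
  rcases eq_or_ne z 0 with rfl | hz
  · simp
  · exact (hA z hz).le

end Helpers

theorem stmt14 {V : Type*} [NormedAddCommGroup V] [InnerProductSpace ℂ V]
    [FiniteDimensional ℂ V]
    (Cε Cα Cm Dε Dα Dm : V →L[ℂ] V)
    (hCε : IsSelfAdjoint Cε) (hCα : IsSelfAdjoint Cα) (hCm : IsSelfAdjoint Cm)
    (hDε : IsSelfAdjoint Dε) (hDα : IsSelfAdjoint Dα) (hDm : IsSelfAdjoint Dm)
    (hCαpos : ∀ x : V, x ≠ 0 → 0 < (⟪Cα x, x⟫).re)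
    (hDαpos : ∀ x : V, x ≠ 0 → 0 < (⟪Dα x, x⟫).re)
    (T : ℝ) (hT : 0 < T) (ω : ℝ) :
    Sfreq Cε Cα Cm Dε Dα Dm T ω =
        CSchur Cε Cα Cm + ((T : ℂ)⁻¹) • DInst Dε Dα Dm +
          ContinuousLinearMap.adjoint (Chat Cα Cm Dα Dm) ∘L
            Ring.inverse (Cα - (Complex.I * (ω : ℂ)) • Dα) ∘L
              (((T : ℂ)⁻¹) • Dα + ((ω : ℂ) ^ 2) • (Dα ∘L Ring.inverse Cα ∘L Dα)) ∘L
                Ring.inverse (Cα + (Complex.I * (ω : ℂ)) • Dα) ∘L Chat Cα Cm Dα Dm ∧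
      IsSelfAdjoint (Sfreq Cε Cα Cm Dε Dα Dm T ω) ∧
      ((∀ x : V, x ≠ 0 → 0 < (⟪CSchur Cε Cα Cm x, x⟫).re) →
        (∀ x : V, 0 ≤ (⟪DInst Dε Dα Dm x, x⟫).re) →
        ∀ x : V, x ≠ 0 → 0 < (⟪Sfreq Cε Cα Cm Dε Dα Dm T ω x, x⟫).re) := by
  have hre (c : ℝ) (x : V) (hx : x ≠ 0) :
      0 < (⟪(Cα + (Complex.I * (c : ℂ)) • Dα) x, x⟫).re := by
    rw [add_apply, inner_add_left, Complex.add_re,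
      re_inner_I_mul_smul_eq_zero hDα, add_zero]
    exact hCαpos x hx
  have hA : IsUnit Cα := isUnit_of_re_inner_pos hCαpos
  have hP : IsUnit (Cα + (Complex.I * (ω : ℂ)) • Dα) := isUnit_of_re_inner_pos (hre ω)
  have hQ : IsUnit (Cα - (Complex.I * (ω : ℂ)) • Dα) := by
    simpa [sub_eq_add_neg] using isUnit_of_re_inner_pos (hre (-ω))
  have hstar : Ring.inverse (Cα - (Complex.I * (ω : ℂ)) • Dα) =
      star (Ring.inverse (Cα + (Complex.I * (ω : ℂ)) • Dα)) := by
    rw [← Ring.inverse_star]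
    simp [hCα.star_eq, hDα.star_eq, sub_eq_add_neg]
  have hrepr : Sfreq Cε Cα Cm Dε Dα Dm T ω =
      CSchur Cε Cα Cm + ((T : ℂ)⁻¹) • DInst Dε Dα Dm +
        ContinuousLinearMap.adjoint (Chat Cα Cm Dα Dm) ∘L
          Ring.inverse (Cα - (Complex.I * (ω : ℂ)) • Dα) ∘L
            (((T : ℂ)⁻¹) • Dα + ((ω : ℂ) ^ 2) • (Dα ∘L Ring.inverse Cα ∘L Dα)) ∘L
              Ring.inverse (Cα + (Complex.I * (ω : ℂ)) • Dα) ∘L Chat Cα Cm Dα Dm := by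
    have hinv := inverse_eq_of_sub_add hA hQ hP
    simp only [Sfreq, CInst, ← ContinuousLinearMap.mul_def, ← mul_assoc]
    generalize Chat Cα Cm Dα Dm = C
    generalize ContinuousLinearMap.adjoint C = C'
    generalize Ring.inverse (Cα - (Complex.I * (ω : ℂ)) • Dα) = Q at hinv ⊢
    generalize Ring.inverse (Cα + (Complex.I * (ω : ℂ)) • Dα) = P at hinv ⊢
    have hinv' : C' * Ring.inverse Cα * C =
        C' * (Q * (Cα + (ω : ℂ) ^ 2 • (Dα * Ring.inverse Cα * Dα)) * P) * C := by
      rw [← hinv]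
    rw [hinv']
    noncomm_ring
  set X := Ring.inverse (Cα + (Complex.I * (ω : ℂ)) • Dα) * Chat Cα Cm Dα Dm with hX
  set M := ((T : ℂ)⁻¹) • Dα + ((ω : ℂ) ^ 2) • (Dα * Ring.inverse Cα * Dα) with hM
  have hcongr : Sfreq Cε Cα Cm Dε Dα Dm T ω =
      CSchur Cε Cα Cm + ((T : ℂ)⁻¹) • DInst Dε Dα Dm + star X * M * X := by
    rw [hrepr, hstar, hX, hM, star_mul, ← ContinuousLinearMap.star_eq_adjoint]
    simp only [← ContinuousLinearMap.mul_def, mul_assoc]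
  have hTsa : IsSelfAdjoint ((T : ℂ)⁻¹) := by simp [IsSelfAdjoint]
  have hωsa : IsSelfAdjoint ((ω : ℂ) ^ 2) := by simp [IsSelfAdjoint]
  have hconj {A B : V →L[ℂ] V} (hA : IsSelfAdjoint A) (hB : IsSelfAdjoint B) :
      IsSelfAdjoint (A * Ring.inverse B * A) := by
    simpa [hA.star_eq] using (isSelfAdjoint_ringInverse hB).conjugate A
  refine ⟨hrepr, ?_, fun hS hD x hx => ?_⟩
  · rw [hcongr]
    have hMsa : IsSelfAdjoint M := (hTsa.smul hDα).add (hωsa.smul (hconj hDα hCα))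
    exact ((hCε.sub (hconj hCm hCα)).add (hTsa.smul (hDε.sub (hconj hDm hDα)))).add
      (hMsa.conjugate' X)
  · have hMnonneg (y : V) : 0 ≤ (⟪M y, y⟫).re := by
      have hDy : 0 ≤ (⟪Dα y, y⟫).re := by
        rcases eq_or_ne y 0 with rfl | hy
        · simp
        · exact (hDαpos y hy).le
      have hsymm : ⟪Dα (Ring.inverse Cα (Dα y)), y⟫ = ⟪Ring.inverse Cα (Dα y), Dα y⟫ :=
        hDα.isSymmetric _ _
      have hCy := re_inner_ringInverse_nonneg hCαpos (Dα y)
      have hsum : (⟪M y, y⟫).re =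
          T⁻¹ * (⟪Dα y, y⟫).re + ω ^ 2 * (⟪Ring.inverse Cα (Dα y), Dα y⟫).re := by
        simp [hM, hsymm, ← Complex.ofReal_inv, ← Complex.ofReal_pow]
      rw [hsum]
      positivity
    have hXx : ⟪star X (M (X x)), x⟫ = ⟪M (X x), X x⟫ := by
      rw [ContinuousLinearMap.star_eq_adjoint, ContinuousLinearMap.adjoint_inner_left]
    have hsum : (⟪Sfreq Cε Cα Cm Dε Dα Dm T ω x, x⟫).re =
        (⟪CSchur Cε Cα Cm x, x⟫).re + T⁻¹ * (⟪DInst Dε Dα Dm x, x⟫).re +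
          (⟪M (X x), X x⟫).re := by
      rw [hcongr, ← hXx]
      simp only [add_apply, smul_apply,
        mul_apply_eq_comp, inner_add_left, inner_smul_left, Complex.add_re,
        Complex.conj_ofReal, ← Complex.ofReal_inv, Complex.re_ofReal_mul]
    rw [hsum]
    have hSx := hS x hx
    have hDx := hD x
    have hMx := hMnonneg (X x)
    positivity
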